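/- For every η > 0 there exists N₀ such that for all odd N = 2k + 1 ≥ N₀ the following holds. Let T be any randomized decision tree on inputs from {0,1}^N such that β_i(T) ≥ N^(-1/5) for every coordinate i. Let X be uniformly distributed on the set of strings in {0,1}^N having exactly k or exactly k + 1 ones. Then Pr[ T(X) = Majority(X) ] ≤ 1/2 + η, where Majority(X) = 1 if X has at least k + 1 ones and 0 otherwise. In particular, such a randomized decision tree cannot compute the majority function on N bits with error probability bounded below 1/2 by a constant. -/

import Mathlib

/-- A randomized decision tree on inputs from `{0,1}^k`: each internal node is
labeled by a coordinate `i ∈ {1,…,k}` and a function `g : {0,1} → [0,1]`; on input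
`x`, the computation at such a node moves to the left child with probability
`g (x i)` and to the right child with probability `1 - g (x i)`, independently
across nodes; leaves are labeled by output bits. -/
inductive RTree (k : ℕ) : Type where
  | leaf : Bool → RTree k
  | node : Fin k → (Bool → ℝ) → RTree k → RTree k → RTree k

namespace RTree

/-- All transition probabilities lie in `[0,1]`. -/
def Valid {k : ℕ} : RTree k → Prop
  | .leaf _ => True
  | .node _ g t0 t1 => (∀ z, 0 ≤ g z ∧ g z ≤ 1) ∧ Valid t0 ∧ Valid t1

/-- The probability, on input `x`, that the computation reaches the leaf at
position `p` (a root-to-leaf path, `false` = left, `true` = right). -/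
def leafDist {k : ℕ} : RTree k → (Fin k → Bool) → List Bool → ℝ
  | .leaf _, _, p => if p = [] then 1 else 0
  | .node _ _ _ _, _, [] => 0
  | .node i g t0 _, x, false :: p => g (x i) * leafDist t0 x p
  | .node i g _ t1, x, true :: p => (1 - g (x i)) * leafDist t1 x p

/-- The probability that the output `T(x)` (the 0/1 label of the leaf reached)
is `1` on input `x`. -/
def outProb {k : ℕ} : RTree k → (Fin k → Bool) → ℝ
  | .leaf b, _ => if b then 1 else 0
  | .node i g t0 t1, x => g (x i) * outProb t0 x + (1 - g (x i)) * outProb t1 x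

/-- `IsMod i T T'` holds iff `T'` is obtained from `T` by keeping unchanged every
node labeled `i` and replacing, at each node labeled `j ≠ i`, the random transition
by an arbitrary fixed deterministic choice of child (a constant transition
function `1` or `0`). -/
def IsMod {k : ℕ} (i : Fin k) : RTree k → RTree k → Prop
  | .leaf b, .leaf b' => b' = b
  | .node j g t0 t1, .node j' g' t0' t1' =>
      j' = j ∧ IsMod i t0 t0' ∧ IsMod i t1 t1' ∧
        (if j = i then g' = g else g' = (fun _ => 1) ∨ g' = (fun _ => 0))
  | _, _ => False

/-- The overlap `∑_ℓ min (D'_0 ℓ) (D'_1 ℓ)` of the two leaf distributions of a tree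
whose only input dependence is on coordinate `i`, when `x i = 0` resp. `x i = 1`. -/
noncomputable def ovl {k : ℕ} (t : RTree k) : ℝ :=
  ∑' p : List Bool, min (t.leafDist (fun _ => false) p) (t.leafDist (fun _ => true) p)

/-- The uncertainty `β_i(T)` of `T` about coordinate `i`: the minimum, over all
trees `T'` obtained from `T` by fixing deterministic choices at all nodes labeled
`j ≠ i`, of the overlap between the leaf distributions of `T'` for `x i = 0` and
`x i = 1`. -/
noncomputable def beta {k : ℕ} (t : RTree k) (i : Fin k) : ℝ :=
  sInf {v : ℝ | ∃ t', IsMod i t t' ∧ ovl t' = v}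

end RTree

/-- The number of ones in a boolean string. -/
def wt {N : ℕ} (x : Fin N → Bool) : ℕ := (Finset.univ.filter fun i => x i = true).card

/-- The majority function: `1` iff more than half the bits are `1`
(for `N = 2k + 1`, iff at least `k + 1` bits are `1`). -/
def maj {N : ℕ} (x : Fin N → Bool) : Bool := decide (N < 2 * wt x)

/-!
Let `F = ∑ x, Pr[T(x) = 1] * X ^ |x|` be the weight enumerator of the tree. Querying a bit splits
`F` into the enumerators of the two subtrees with reweighted bits, and a leaf contributes a product
of linear factors `a + b * z`, one for each bit. On the unit circle such a factor falls short of
`a + b` by at least `(2 - ‖1 + z‖) * min a b`, and for a bit `i` the minima collected along any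
deterministic choice at the other queries add up to an overlap as in the definition of `β_i`. Hence
`‖F (exp (θ * I))‖ ≤ ∏ i, (2 - (2 - ‖1 + exp (θ * I)‖) * β_i) ≤ 2 ^ N * exp (-c * θ ^ 2 * ∑ i, β_i)`
with `c = 1 / (2 * π ^ 2)`.

The success probability exceeds `1 / 2` by a multiple of the difference of the coefficients of `F`
at `k + 1` and `k`. This difference is a Fourier coefficient of `(1 - z) * F z`, and the factor
`1 - z`, of norm at most `|θ|`, gains a square root over the bound for a single coefficient: the
difference is `O(2 ^ N / ∑ i, β_i)`, which is negligible against `N.choose k ≈ 2 ^ N / √N` as soon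
as `∑ i, β_i` outgrows `√N`.
-/

section Analysis

open Complex Polynomial

theorem norm_smul_add_smul_le_add_sub_min {E : Type*} [SeminormedAddCommGroup E] [NormedSpace ℝ E]
    {u v : E} (hu : ‖u‖ ≤ 1) (hv : ‖v‖ ≤ 1) {a b : ℝ} (ha : 0 ≤ a) (hb : 0 ≤ b) :
    ‖a • u + b • v‖ ≤ a + b - (2 - ‖u + v‖) * min a b := by
  wlog hab : a ≤ b generalizing a b u v
  · rw [add_comm (a • u), add_comm a, add_comm u, min_comm]
    exact this hv hu hb ha (le_of_not_ge hab)
  calc ‖a • u + b • v‖ = ‖a • (u + v) + (b - a) • v‖ := by congr 1; module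
    _ ≤ a * ‖u + v‖ + (b - a) * ‖v‖ := by
      refine (norm_add_le _ _).trans_eq ?_
      rw [norm_smul_of_nonneg ha, norm_smul_of_nonneg (sub_nonneg.2 hab)]
    _ ≤ a * ‖u + v‖ + (b - a) * 1 := by gcongr
    _ = a + b - (2 - ‖u + v‖) * min a b := by rw [min_eq_left hab]; ring

theorem norm_one_add_exp_mul_I_le {θ : ℝ} (hθ : |θ| ≤ Real.pi) :
    ‖1 + exp (θ * I)‖ ≤ 2 - θ ^ 2 / Real.pi ^ 2 := by
  have hle : θ ^ 2 / Real.pi ^ 2 ≤ 1 :=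
    div_le_one_of_le₀ (sq_le_sq' (abs_le.1 hθ).1 (abs_le.1 hθ).2) (by positivity)
  have hsq : ‖1 + exp (θ * I)‖ ^ 2 = 2 + 2 * Real.cos θ := by
    rw [← normSq_eq_norm_sq, normSq_apply]
    simp only [add_re, add_im, one_re, one_im, exp_ofReal_mul_I_re, exp_ofReal_mul_I_im]
    linear_combination Real.sin_sq_add_cos_sq θ
  have hcos : Real.cos θ ≤ 1 - 2 * (θ ^ 2 / Real.pi ^ 2) :=
    (Real.cos_le_one_sub_mul_cos_sq hθ).trans_eq (by ring)
  refine le_of_sq_le_sq ?_ (by linarith)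
  nlinarith [sq_nonneg (θ ^ 2 / Real.pi ^ 2)]

theorem integral_abs_mul_exp_neg_mul_sq {b : ℝ} (hb : 0 < b) :
    ∫ x : ℝ, |x| * Real.exp (-b * x ^ 2) = b⁻¹ := by
  have hIoi : ∫ x in Set.Ioi (0 : ℝ), x * Real.exp (-b * x ^ 2) = (2 * b)⁻¹ := by
    have h := integral_mul_cexp_neg_mul_sq (b := b) (by simpa using hb)
    rw [← ofReal_inj, ← integral_complex_ofReal]
    exact_mod_cast h
  calc ∫ x : ℝ, |x| * Real.exp (-b * x ^ 2) = ∫ x : ℝ, |x| * Real.exp (-b * |x| ^ 2) := by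
        simp only [sq_abs]
    _ = 2 * ∫ x in Set.Ioi (0 : ℝ), x * Real.exp (-b * x ^ 2) :=
        integral_comp_abs (f := fun x => x * Real.exp (-b * x ^ 2))
    _ = b⁻¹ := by rw [hIoi]; field_simp

theorem norm_coeff_le_integral_norm_eval (p : ℂ[X]) (n : ℕ) :
    ‖p.coeff n‖ ≤ (2 * Real.pi)⁻¹ * ∫ θ in -Real.pi..Real.pi, ‖p.eval (exp (θ * I))‖ := by
  have : Fact (0 < 2 * Real.pi) := ⟨Real.two_pi_pos⟩
  have heval (θ : ℝ) : p.toAddCircle (θ : AddCircle (2 * Real.pi)) = p.eval (exp (θ * I)) := by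
    simp [toAddCircle, aeval_continuousMap_apply, AddCircle.toCircle_apply_mk]
  rw [← fourierCoeff_toAddCircle_natCast, fourierCoeff_eq_intervalIntegral _ _ (-Real.pi),
    norm_smul, Real.norm_of_nonneg (by positivity), one_div,
    show -Real.pi + 2 * Real.pi = Real.pi by ring]
  gcongr
  refine (intervalIntegral.norm_integral_le_integral_norm (by linarith [Real.pi_pos])).trans_eq ?_
  simp [heval, Circle.norm_coe]

theorem norm_coeff_succ_sub_coeff_le {p : ℂ[X]} {M b : ℝ} (hb : 0 < b)
    (hp : ∀ θ : ℝ, |θ| ≤ Real.pi → ‖p.eval (exp (θ * I))‖ ≤ M * Real.exp (-b * θ ^ 2)) (n : ℕ) :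
    ‖p.coeff (n + 1) - p.coeff n‖ ≤ M / (2 * Real.pi * b) := by
  have hM : 0 ≤ M := by simpa using (norm_nonneg _).trans (hp 0 (by simp [Real.pi_nonneg]))
  have hint : MeasureTheory.Integrable fun θ : ℝ => |θ| * Real.exp (-b * θ ^ 2) := by
    simpa using (integrable_mul_exp_neg_mul_sq hb).norm
  have hpi : -Real.pi ≤ Real.pi := by linarith [Real.pi_pos]
  have hbound (θ : ℝ) (hθ : θ ∈ Set.Icc (-Real.pi) Real.pi) :
      ‖((1 - X) * p).eval (exp (θ * I))‖ ≤ M * (|θ| * Real.exp (-b * θ ^ 2)) :=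
    calc ‖((1 - X) * p).eval (exp (θ * I))‖
        = ‖exp (I * θ) - 1‖ * ‖p.eval (exp (θ * I))‖ := by
          rw [eval_mul, norm_mul, eval_sub, eval_one, eval_X, norm_sub_rev, mul_comm I]
      _ ≤ |θ| * (M * Real.exp (-b * θ ^ 2)) := by
          gcongr
          exacts [Real.norm_exp_I_mul_ofReal_sub_one_le, hp θ (abs_le.2 hθ)]
      _ = M * (|θ| * Real.exp (-b * θ ^ 2)) := by ring
  calc ‖p.coeff (n + 1) - p.coeff n‖ = ‖((1 - X) * p).coeff (n + 1)‖ := by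
        rw [sub_mul, one_mul, coeff_sub, coeff_X_mul]
    _ ≤ (2 * Real.pi)⁻¹ * ∫ θ in -Real.pi..Real.pi, ‖((1 - X) * p).eval (exp (θ * I))‖ :=
        norm_coeff_le_integral_norm_eval _ _
    _ ≤ (2 * Real.pi)⁻¹ * ∫ θ in -Real.pi..Real.pi, M * (|θ| * Real.exp (-b * θ ^ 2)) := by
        gcongr
        exact intervalIntegral.integral_mono_on hpi
          (Continuous.intervalIntegrable (by fun_prop) _ _)
          (Continuous.intervalIntegrable (by fun_prop) _ _) hbound
    _ ≤ (2 * Real.pi)⁻¹ * (M * ∫ θ : ℝ, |θ| * Real.exp (-b * θ ^ 2)) := by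
        rw [intervalIntegral.integral_const_mul, intervalIntegral.integral_of_le hpi]
        gcongr
        · exact Filter.Eventually.of_forall fun θ => by positivity
        · exact MeasureTheory.Measure.restrict_le_self
    _ = M / (2 * Real.pi * b) := by
        rw [integral_abs_mul_exp_neg_mul_sq hb]; field_simp

end Analysis

section Combinatorics

open Finset Polynomial

theorem sixteen_pow_le_mul_centralBinom_sq (n : ℕ) :
    16 ^ n ≤ (4 * n + 1) * n.centralBinom ^ 2 := by
  induction n with
  | zero => simp
  | succ n ih =>
    refine Nat.le_of_mul_le_mul_left ?_ (by positivity : 0 < (n + 1) ^ 2)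
    calc (n + 1) ^ 2 * 16 ^ (n + 1) = 16 * (n + 1) ^ 2 * 16 ^ n := by ring
      _ ≤ 16 * (n + 1) ^ 2 * ((4 * n + 1) * n.centralBinom ^ 2) := by gcongr
      _ = 4 * n.centralBinom ^ 2 * (4 * (n + 1) ^ 2 * (4 * n + 1)) := by ring
      _ ≤ 4 * n.centralBinom ^ 2 * ((2 * n + 1) ^ 2 * (4 * n + 5)) := by
        gcongr 4 * _ * ?_; nlinarith
      _ = (4 * n + 5) * (2 * (2 * n + 1) * n.centralBinom) ^ 2 := by ring
      _ = (4 * n + 5) * ((n + 1) * (n + 1).centralBinom) ^ 2 := by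
        rw [Nat.succ_mul_centralBinom_succ]
      _ = (n + 1) ^ 2 * ((4 * (n + 1) + 1) * (n + 1).centralBinom ^ 2) := by ring

theorem two_pow_le_sqrt_mul_choose (k : ℕ) :
    (2 : ℝ) ^ (2 * k + 1) ≤ 4 * √(2 * k + 1) * (2 * k + 1).choose k := by
  have hcentral : (16 : ℝ) ^ k ≤ (4 * k + 1) * (k.centralBinom : ℝ) ^ 2 := by
    exact_mod_cast sixteen_pow_le_mul_centralBinom_sq k
  have hchoose : (k.centralBinom : ℝ) ≤ (2 * k + 1).choose k := by
    exact_mod_cast Nat.choose_le_choose k (Nat.le_succ (2 * k))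
  refine le_of_sq_le_sq ?_ (by positivity)
  calc ((2 : ℝ) ^ (2 * k + 1)) ^ 2 = 4 * 16 ^ k := by
        rw [← pow_mul, show (16 : ℝ) = 2 ^ 4 by norm_num, ← pow_mul]; ring
    _ ≤ 4 * ((4 * k + 1) * ((2 * k + 1).choose k : ℝ) ^ 2) := by
        gcongr; exact hcentral.trans (by gcongr)
    _ ≤ 16 * (2 * k + 1) * ((2 * k + 1).choose k : ℝ) ^ 2 := by
        rw [← mul_assoc]; gcongr ?_ * _; linarith
    _ = (4 * √(2 * k + 1) * (2 * k + 1).choose k) ^ 2 := by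
        rw [mul_pow, mul_pow, Real.sq_sqrt (by positivity)]; norm_num

theorem sum_prod_mul_pow_wt {R : Type*} [CommSemiring R] {N : ℕ} (a : Fin N → Bool → R) (z : R) :
    ∑ x : Fin N → Bool, (∏ i, a i (x i)) * z ^ wt x = ∏ i, (a i false + a i true * z) := by
  have hpow (x : Fin N → Bool) : z ^ wt x = ∏ i, if x i = true then z else 1 := by
    simp [wt, prod_ite]
  simp_rw [hpow, ← prod_mul_distrib]
  rw [← Fintype.prod_sum fun i b => a i b * if b = true then z else 1]
  simp [add_comm]

theorem card_filter_wt_eq (N n : ℕ) : #{x : Fin N → Bool | wt x = n} = N.choose n := by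
  have h : ∑ x : Fin N → Bool, (X : ℕ[X]) ^ wt x = (1 + X) ^ N := by
    simpa using sum_prod_mul_pow_wt (N := N) (fun _ _ => 1) (X : ℕ[X])
  calc #{x : Fin N → Bool | wt x = n} = (∑ x : Fin N → Bool, (X : ℕ[X]) ^ wt x).coeff n := by
        simp [finsetSum_coeff, coeff_X_pow, eq_comm (a := n)]
    _ = N.choose n := by rw [h, coeff_one_add_X_pow, Nat.cast_id]

theorem prod_apply_update {ι M : Type*} {α : ι → Type*} [Fintype ι] [DecidableEq ι] [CommMonoid M]
    (f : ∀ i, α i → M) (a : ∀ i, α i) (j : ι) (v : α j) :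
    ∏ i, f i (Function.update a j v i) = f j v * ∏ i ∈ univ \ {j}, f i (a i) := by
  simp_rw [Function.apply_update f a, prod_update_of_mem (mem_univ j)]

end Combinatorics

theorem hasSum_list_bool {M : Type*} [AddCommMonoid M] [TopologicalSpace M] [ContinuousAdd M]
    {f : List Bool → M} {u v : M} (hnil : f [] = 0)
    (hfalse : HasSum (fun p => f (false :: p)) u) (htrue : HasSum (fun p => f (true :: p)) v) :
    HasSum f (u + v) := by
  have hdisj : Disjoint (Set.range (List.cons false)) (Set.range (List.cons true)) := by
    simp [Set.disjoint_left]
  have hsupp : Function.support f ⊆ Set.range (List.cons false) ∪ Set.range (List.cons true) := by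
    rintro (_ | ⟨_ | _, p⟩) hp
    · exact absurd hnil hp
    · exact .inl ⟨p, rfl⟩
    · exact .inr ⟨p, rfl⟩
  exact (hasSum_subtype_iff_of_support_subset hsupp).1 <|
    HasSum.add_disjoint hdisj (List.cons_injective.hasSum_range_iff.2 hfalse)
      (List.cons_injective.hasSum_range_iff.2 htrue)

namespace RTree

open Finset

variable {N : ℕ} {t : RTree N}

section Uncertainty

theorem Valid.leafDist_nonneg (ht : t.Valid) (x : Fin N → Bool) (p : List Bool) :
    0 ≤ t.leafDist x p := by
  induction t generalizing p with
  | leaf b => unfold leafDist; split_ifs <;> norm_num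
  | node i g t₀ t₁ ih₀ ih₁ =>
    obtain ⟨hg, ht₀, ht₁⟩ := ht
    rcases p with _ | ⟨_ | _, p⟩
    · exact le_rfl
    · exact mul_nonneg (hg _).1 (ih₀ ht₀ p)
    · exact mul_nonneg (sub_nonneg.2 (hg _).2) (ih₁ ht₁ p)

theorem Valid.ovl_nonneg (ht : t.Valid) : 0 ≤ t.ovl :=
  tsum_nonneg fun p => le_min (ht.leafDist_nonneg _ p) (ht.leafDist_nonneg _ p)

theorem Valid.of_isMod {i : Fin N} {t' : RTree N} (ht : t.Valid) (h : IsMod i t t') :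
    t'.Valid := by
  induction t generalizing t' with
  | leaf b =>
    cases t' with
    | leaf => trivial
    | node => exact h.elim
  | node j g t₀ t₁ ih₀ ih₁ =>
    cases t' with
    | leaf => exact h.elim
    | node j' g' t₀' t₁' =>
      obtain ⟨hg, ht₀, ht₁⟩ := ht
      obtain ⟨-, h₀, h₁, hg'⟩ := h
      refine ⟨fun b => ?_, ih₀ ht₀ h₀, ih₁ ht₁ h₁⟩
      split_ifs at hg'
      · exact hg' ▸ hg b
      · rcases hg' with rfl | rfl <;> norm_num

theorem Valid.zero_mem_lowerBounds_ovl (ht : t.Valid) (i : Fin N) :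
    0 ∈ lowerBounds {v : ℝ | ∃ t', IsMod i t t' ∧ ovl t' = v} := by
  rintro _ ⟨t', ht', rfl⟩
  exact (ht.of_isMod ht').ovl_nonneg

theorem Valid.beta_nonneg (ht : t.Valid) (i : Fin N) : 0 ≤ t.beta i :=
  Real.sInf_nonneg fun _ hv => ht.zero_mem_lowerBounds_ovl i hv

/-- The least weighted overlap `∑_ℓ min (a 0 * D'_0 ℓ) (a 1 * D'_1 ℓ)` over all trees `T'` as in
the definition of the uncertainty `β_i`, computed by recursion on the tree. The weights `a` carry
the probabilities collected at the queries to `i` made so far. -/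
noncomputable def minOverlap (i : Fin N) : RTree N → (Bool → ℝ) → ℝ
  | .leaf _, a => min (a false) (a true)
  | .node j g t₀ t₁, a =>
      if j = i then minOverlap i t₀ (a * g) + minOverlap i t₁ (a * (1 - g))
      else min (minOverlap i t₀ a) (minOverlap i t₁ a)

theorem minOverlap_le (i : Fin N) (t : RTree N) (a : Bool → ℝ) (b : Bool) :
    minOverlap i t a ≤ a b := by
  induction t generalizing a with
  | leaf c => cases b <;> simp [minOverlap]
  | node j g t₀ t₁ ih₀ ih₁ =>
    unfold minOverlap
    split_ifs
    · calc minOverlap i t₀ (a * g) + minOverlap i t₁ (a * (1 - g))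
          ≤ a b * g b + a b * (1 - g b) := add_le_add (ih₀ _) (ih₁ _)
        _ = a b := by ring
    · exact (min_le_left _ _).trans (ih₀ a)

theorem exists_isMod_hasSum_minOverlap (i : Fin N) (t : RTree N) (a : Bool → ℝ) :
    ∃ t', IsMod i t t' ∧
      HasSum (fun p => min (a false * t'.leafDist (fun _ => false) p)
        (a true * t'.leafDist (fun _ => true) p)) (minOverlap i t a) := by
  induction t generalizing a with
  | leaf c =>
    refine ⟨.leaf c, rfl, ?_⟩
    rw [minOverlap]
    convert hasSum_ite_eq ([] : List Bool) (min (a false) (a true)) using 2 with p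
    by_cases hp : p = [] <;> simp [leafDist, hp]
  | node j g t₀ t₁ ih₀ ih₁ =>
    by_cases hji : j = i
    · obtain ⟨t₀', hmod₀, hsum₀⟩ := ih₀ (a * g)
      obtain ⟨t₁', hmod₁, hsum₁⟩ := ih₁ (a * (1 - g))
      refine ⟨.node j g t₀' t₁', ⟨rfl, hmod₀, hmod₁, by simp [hji]⟩, ?_⟩
      rw [minOverlap, if_pos hji]
      refine hasSum_list_bool (by simp [leafDist]) ?_ ?_
      · simpa [leafDist, mul_assoc] using hsum₀
      · simpa [leafDist, mul_assoc] using hsum₁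
    · obtain ⟨t₀', hmod₀, hsum₀⟩ := ih₀ a
      obtain ⟨t₁', hmod₁, hsum₁⟩ := ih₁ a
      rw [minOverlap, if_neg hji]
      rcases le_total (minOverlap i t₀ a) (minOverlap i t₁ a) with hle | hle
      · refine ⟨.node j (fun _ => 1) t₀' t₁', ⟨rfl, hmod₀, hmod₁, by simp [hji]⟩, ?_⟩
        rw [min_eq_left hle, ← add_zero (minOverlap i t₀ a)]
        refine hasSum_list_bool (by simp [leafDist]) ?_ ?_
        · simpa [leafDist] using hsum₀
        · simp [leafDist, hasSum_zero]
      · refine ⟨.node j (fun _ => 0) t₀' t₁', ⟨rfl, hmod₀, hmod₁, by simp [hji]⟩, ?_⟩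
        rw [min_eq_right hle, ← zero_add (minOverlap i t₁ a)]
        refine hasSum_list_bool (by simp [leafDist]) ?_ ?_
        · simp [leafDist, hasSum_zero]
        · simpa [leafDist] using hsum₁

theorem Valid.beta_le_minOverlap_one (ht : t.Valid) (i : Fin N) :
    t.beta i ≤ minOverlap i t 1 := by
  obtain ⟨t', hmod, hsum⟩ := exists_isMod_hasSum_minOverlap i t 1
  exact csInf_le ⟨0, ht.zero_mem_lowerBounds_ovl i⟩ ⟨t', hmod, by simpa [ovl] using hsum.tsum_eq⟩

end Uncertainty

section DampedMass

/-- The total mass `a 0 + a 1` of a bit, diminished by `c` times the least overlap about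
coordinate `i` of the tree under the weights `a`. The product of these numbers over all coordinates
is the bound on the weight enumerator that survives the recursion on the tree. -/
noncomputable def dampedMass (c : ℝ) (i : Fin N) (t : RTree N) (a : Bool → ℝ) : ℝ :=
  a false + a true - c * minOverlap i t a

variable {c : ℝ} {i j : Fin N} {g : Bool → ℝ} {t₀ t₁ : RTree N}

theorem dampedMass_nonneg (hc₀ : 0 ≤ c) (hc₂ : c ≤ 2) {a : Bool → ℝ} (ha : 0 ≤ a) :
    0 ≤ dampedMass c i t a := by
  have h₀ : c * minOverlap i t a ≤ c * a false := by gcongr; exact minOverlap_le ..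
  have h₁ : c * minOverlap i t a ≤ c * a true := by gcongr; exact minOverlap_le ..
  have hc : c * (a false + a true) ≤ 2 * (a false + a true) := by
    gcongr; exact add_nonneg (ha _) (ha _)
  unfold dampedMass
  linarith

theorem dampedMass_node_self (a : Bool → ℝ) :
    dampedMass c j (.node j g t₀ t₁) a =
      dampedMass c j t₀ (a * g) + dampedMass c j t₁ (a * (1 - g)) := by
  simp only [dampedMass, minOverlap, if_pos, Pi.mul_apply, Pi.sub_apply, Pi.one_apply]
  ring

theorem max_dampedMass_le_dampedMass_node (hc : 0 ≤ c) (hji : j ≠ i) (a : Bool → ℝ) :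
    max (dampedMass c i t₀ a) (dampedMass c i t₁ a) ≤ dampedMass c i (.node j g t₀ t₁) a := by
  simp only [dampedMass, minOverlap, if_neg hji]
  refine max_le ?_ ?_ <;> gcongr
  exacts [min_le_left _ _, min_le_right _ _]

theorem prod_dampedMass_add_prod_dampedMass_le (hc₀ : 0 ≤ c) (hc₂ : c ≤ 2)
    {a : Fin N → Bool → ℝ} (ha : 0 ≤ a) (hg₀ : 0 ≤ g) (hg₁ : g ≤ 1) :
    ∏ i, dampedMass c i t₀ (Function.update a j (a j * g) i) +
        ∏ i, dampedMass c i t₁ (Function.update a j (a j * (1 - g)) i) ≤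
      ∏ i, dampedMass c i (.node j g t₀ t₁) (a i) := by
  have hprod {s : RTree N} {h : Bool → ℝ} (hh : 0 ≤ h)
      (hs : ∀ i ≠ j, dampedMass c i s (a i) ≤ dampedMass c i (.node j g t₀ t₁) (a i)) :
      ∏ i, dampedMass c i s (Function.update a j (a j * h) i) ≤
        dampedMass c j s (a j * h) *
          ∏ i ∈ univ \ {j}, dampedMass c i (.node j g t₀ t₁) (a i) := by
    rw [prod_apply_update (fun i => dampedMass c i s)]
    refine mul_le_mul_of_nonneg_left ?_ (dampedMass_nonneg hc₀ hc₂ (mul_nonneg (ha j) hh))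
    exact prod_le_prod (fun i _ => dampedMass_nonneg hc₀ hc₂ (ha i))
      fun i hi => hs i (by simpa using hi)
  have hnode (i) (hi : i ≠ j) := max_le_iff.1 <|
    max_dampedMass_le_dampedMass_node (g := g) (t₀ := t₀) (t₁ := t₁) hc₀ hi.symm (a i)
  refine (add_le_add (hprod hg₀ fun i hi => (hnode i hi).1)
    (hprod (sub_nonneg.2 hg₁) fun i hi => (hnode i hi).2)).trans_eq ?_
  rw [← add_mul, ← dampedMass_node_self, ← erase_eq,
    mul_prod_erase univ (fun i => dampedMass c i (.node j g t₀ t₁) (a i)) (mem_univ j)]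

end DampedMass

section WeightEnumerator

open Complex Polynomial

/-- The weight enumerator `∑ x, (∏ i, a i (x i)) * Pr[T(x) = 1] * X ^ |x|` of the inputs accepted by
the tree, where the bits of the input carry the weights `a`. It has complex coefficients so that it
can be evaluated on the unit circle. -/
noncomputable def enumerator (t : RTree N) (a : Fin N → Bool → ℝ) : ℂ[X] :=
  ∑ x, C (((∏ i, a i (x i)) * t.outProb x : ℝ) : ℂ) * X ^ wt x

theorem eval_enumerator_leaf_true (a : Fin N → Bool → ℝ) (z : ℂ) :
    ((leaf true).enumerator a).eval z = ∏ i, (a i false + a i true * z) := by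
  rw [← sum_prod_mul_pow_wt fun i b => (a i b : ℂ)]
  simp [enumerator, outProb, eval_finsetSum, eval_prod]

theorem enumerator_node (j : Fin N) (g : Bool → ℝ) (t₀ t₁ : RTree N) (a : Fin N → Bool → ℝ) :
    (node j g t₀ t₁).enumerator a =
      t₀.enumerator (Function.update a j (a j * g)) +
        t₁.enumerator (Function.update a j (a j * (1 - g))) := by
  have hweight (h : Bool → ℝ) (x : Fin N → Bool) :
      ∏ i, Function.update a j (a j * h) i (x i) = h (x j) * ∏ i, a i (x i) := by
    rw [prod_apply_update (fun i (w : Bool → ℝ) => w (x i)) a,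
      ← mul_prod_erase univ (fun i => a i (x i)) (mem_univ j), erase_eq]
    simp only [Pi.mul_apply]
    ring
  simp only [enumerator, ← sum_add_distrib, hweight, outProb]
  refine sum_congr rfl fun x _ => ?_
  rw [← add_mul, ← C_add, ← ofReal_add, Pi.sub_apply, Pi.one_apply]
  congr 3
  ring

theorem Valid.norm_eval_enumerator_le (ht : t.Valid) {a : Fin N → Bool → ℝ} (ha : 0 ≤ a) {z : ℂ}
    (hz : ‖z‖ ≤ 1) :
    ‖(t.enumerator a).eval z‖ ≤ ∏ i, dampedMass (2 - ‖1 + z‖) i t (a i) := by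
  have hc₀ : 0 ≤ 2 - ‖1 + z‖ := by linarith [norm_add_le 1 z, norm_one (α := ℂ)]
  have hc₂ : 2 - ‖1 + z‖ ≤ 2 := by linarith [norm_nonneg (1 + z)]
  induction t generalizing a with
  | leaf b =>
    cases b
    · simpa [enumerator, outProb] using
        prod_nonneg fun i _ => dampedMass_nonneg (t := leaf false) hc₀ hc₂ (ha i)
    · rw [eval_enumerator_leaf_true, norm_prod]
      refine prod_le_prod (fun i _ => norm_nonneg _) fun i _ => ?_
      simpa [dampedMass, minOverlap] using
        norm_smul_add_smul_le_add_sub_min (norm_one (α := ℂ)).le hz (ha i false) (ha i true)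
  | node j g t₀ t₁ ih₀ ih₁ =>
    obtain ⟨hg, ht₀, ht₁⟩ := ht
    have hg₀ : 0 ≤ g := fun b => (hg b).1
    have hg₁ : g ≤ 1 := fun b => (hg b).2
    have hupdate {h : Bool → ℝ} (hh : 0 ≤ h) : 0 ≤ Function.update a j (a j * h) :=
      le_update_iff.2 ⟨mul_nonneg (ha j) hh, fun i _ => ha i⟩
    rw [enumerator_node, eval_add]
    refine (norm_add_le _ _).trans <|
      (add_le_add (ih₀ ht₀ (hupdate hg₀)) (ih₁ ht₁ (hupdate (sub_nonneg.2 hg₁)))).trans ?_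
    exact prod_dampedMass_add_prod_dampedMass_le hc₀ hc₂ ha hg₀ hg₁

theorem Valid.norm_eval_enumerator_one_exp_le (ht : t.Valid) {θ : ℝ} (hθ : |θ| ≤ Real.pi) :
    ‖(t.enumerator 1).eval (exp (θ * I))‖ ≤
      2 ^ N * Real.exp (-((∑ i, t.beta i) / (2 * Real.pi ^ 2)) * θ ^ 2) := by
  set z := exp (θ * I)
  have hz : ‖z‖ = 1 := norm_exp_ofReal_mul_I θ
  have hc : θ ^ 2 / Real.pi ^ 2 ≤ 2 - ‖1 + z‖ := by linarith [norm_one_add_exp_mul_I_le hθ]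
  have hc₀ : 0 ≤ 2 - ‖1 + z‖ := le_trans (by positivity) hc
  have hc₂ : 2 - ‖1 + z‖ ≤ 2 := by linarith [norm_nonneg (1 + z)]
  have hfactor (i : Fin N) : dampedMass (2 - ‖1 + z‖) i t 1 ≤
      2 * Real.exp (-(t.beta i / (2 * Real.pi ^ 2)) * θ ^ 2) :=
    calc dampedMass (2 - ‖1 + z‖) i t 1 ≤ 2 - θ ^ 2 / Real.pi ^ 2 * t.beta i := by
          have := mul_le_mul hc (ht.beta_le_minOverlap_one i) (ht.beta_nonneg i) hc₀
          simp only [dampedMass, Pi.one_apply]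
          linarith
      _ = 2 * (-(t.beta i / (2 * Real.pi ^ 2)) * θ ^ 2 + 1) := by field_simp; ring
      _ ≤ 2 * Real.exp (-(t.beta i / (2 * Real.pi ^ 2)) * θ ^ 2) := by
          gcongr; exact Real.add_one_le_exp _
  calc ‖(t.enumerator 1).eval z‖ ≤ ∏ i, dampedMass (2 - ‖1 + z‖) i t 1 :=
        ht.norm_eval_enumerator_le zero_le_one hz.le
    _ ≤ ∏ i, 2 * Real.exp (-(t.beta i / (2 * Real.pi ^ 2)) * θ ^ 2) :=
        prod_le_prod (fun i _ => dampedMass_nonneg hc₀ hc₂ zero_le_one) fun i _ => hfactor i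
    _ = 2 ^ N * Real.exp (-((∑ i, t.beta i) / (2 * Real.pi ^ 2)) * θ ^ 2) := by
        rw [prod_mul_distrib, prod_const, card_fin, ← Real.exp_sum, ← sum_mul, sum_neg_distrib,
          sum_div]

end WeightEnumerator

section Levels

/-- The expected number of inputs with exactly `n` ones that the tree accepts. -/
noncomputable def levelMass (t : RTree N) (n : ℕ) : ℝ :=
  ∑ x with wt x = n, t.outProb x

theorem coeff_enumerator_one (t : RTree N) (n : ℕ) :
    (t.enumerator 1).coeff n = t.levelMass n := by
  simp [enumerator, levelMass, Polynomial.finsetSum_coeff, Polynomial.coeff_X_pow, sum_filter,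
    eq_comm (a := n), apply_ite Complex.ofReal]

theorem Valid.abs_levelMass_succ_sub_le (ht : t.Valid) (hβ : 0 < ∑ i, t.beta i) (n : ℕ) :
    |t.levelMass (n + 1) - t.levelMass n| ≤ 2 ^ N * Real.pi / ∑ i, t.beta i := by
  have h := norm_coeff_succ_sub_coeff_le (div_pos hβ (by positivity))
    (fun θ hθ => ht.norm_eval_enumerator_one_exp_le hθ) n
  rw [coeff_enumerator_one, coeff_enumerator_one, ← Complex.ofReal_sub, Complex.norm_real] at h
  refine h.trans_eq ?_
  field_simp

/-- The probability that the tree computes the majority of a uniformly random string with exactly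
`k` or exactly `k + 1` ones. -/
noncomputable def majoritySuccess {k : ℕ} (t : RTree (2 * k + 1)) : ℝ :=
  (1 / (#{x : Fin (2 * k + 1) → Bool | wt x = k ∨ wt x = k + 1} : ℝ)) *
    ∑ x with wt x = k ∨ wt x = k + 1, if maj x = true then t.outProb x else 1 - t.outProb x

theorem majoritySuccess_eq {k : ℕ} (t : RTree (2 * k + 1)) :
    t.majoritySuccess =
      1 / 2 + (t.levelMass (k + 1) - t.levelMass k) / (2 * (2 * k + 1).choose k) := by
  have hdisj : Disjoint ({x : Fin (2 * k + 1) → Bool | wt x = k} : Finset (Fin (2 * k + 1) → Bool))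
      ({x | wt x = k + 1} : Finset (Fin (2 * k + 1) → Bool)) :=
    disjoint_filter.2 fun x _ h => by omega
  have hlow : ∑ x : Fin (2 * k + 1) → Bool with wt x = k,
      (if maj x = true then t.outProb x else 1 - t.outProb x) =
        (2 * k + 1).choose k - t.levelMass k := by
    rw [levelMass, ← card_filter_wt_eq, card_eq_sum_ones, Nat.cast_sum, ← sum_sub_distrib]
    refine sum_congr rfl fun x hx => ?_
    rw [if_neg (by simp [maj, (mem_filter.1 hx).2]), Nat.cast_one]
  have hhigh : ∑ x : Fin (2 * k + 1) → Bool with wt x = k + 1,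
      (if maj x = true then t.outProb x else 1 - t.outProb x) = t.levelMass (k + 1) :=
    sum_congr rfl fun x hx => if_pos (by simp [maj, (mem_filter.1 hx).2]; omega)
  have hchoose : ((2 * k + 1).choose k : ℝ) ≠ 0 := by
    exact_mod_cast (Nat.choose_pos (by omega)).ne'
  rw [majoritySuccess, filter_or, sum_union hdisj, card_union_of_disjoint hdisj, hlow, hhigh,
    card_filter_wt_eq, card_filter_wt_eq, Nat.choose_symm_half]
  push_cast
  field_simp
  ring

theorem Valid.majoritySuccess_le {k : ℕ} {t : RTree (2 * k + 1)} (ht : t.Valid)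
    (hβ : 0 < ∑ i, t.beta i) :
    t.majoritySuccess ≤ 1 / 2 + 2 * Real.pi * √(2 * k + 1) / ∑ i, t.beta i := by
  have hchoose : (0 : ℝ) < (2 * k + 1).choose k := by
    exact_mod_cast Nat.choose_pos (by omega)
  rw [majoritySuccess_eq]
  gcongr 1 / 2 + ?_
  rw [div_le_iff₀ (by positivity)]
  calc t.levelMass (k + 1) - t.levelMass k
      ≤ 2 ^ (2 * k + 1) * Real.pi / ∑ i, t.beta i :=
        (le_abs_self _).trans (ht.abs_levelMass_succ_sub_le hβ k)
    _ ≤ 4 * √(2 * k + 1) * (2 * k + 1).choose k * Real.pi / ∑ i, t.beta i := by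
        gcongr; exact two_pow_le_sqrt_mul_choose k
    _ = _ := by ring

end Levels

end RTree

open Filter BigOperators in
theorem uncertain_tree_cannot_compute_majority_general {γ : ℝ} (hγ : γ < 1 / 2) :
    ∀ η : ℝ, 0 < η → ∃ N₀ : ℕ, ∀ k : ℕ, N₀ ≤ 2 * k + 1 →
      ∀ T : RTree (2 * k + 1), T.Valid →
        ((2 * k + 1 : ℕ) : ℝ) ^ (-γ) ≤ 𝔼 i, T.beta i →
        T.majoritySuccess ≤ 1 / 2 + η := by
  intro η hη
  have hlim : Tendsto (fun n : ℕ => 2 * Real.pi * (n : ℝ) ^ (-(1 / 2 - γ))) atTop (nhds 0) := by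
    simpa using ((tendsto_rpow_neg_atTop (sub_pos.2 hγ)).comp
      tendsto_natCast_atTop_atTop).const_mul (2 * Real.pi)
  obtain ⟨N₀, hN₀⟩ := eventually_atTop.1 (hlim.eventually_le_const hη)
  refine ⟨N₀, fun k hk T hT hβ => ?_⟩
  set n : ℝ := ((2 * k + 1 : ℕ) : ℝ) with hn
  have hn₀ : 0 < n := by positivity
  have hsum : n * n ^ (-γ) ≤ ∑ i, T.beta i := by
    rw [← Fintype.card_smul_expect, Fintype.card_fin, nsmul_eq_mul]
    gcongr
  calc T.majoritySuccess ≤ 1 / 2 + 2 * Real.pi * √n / ∑ i, T.beta i := by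
        simpa [hn] using hT.majoritySuccess_le (lt_of_lt_of_le (by positivity) hsum)
    _ ≤ 1 / 2 + 2 * Real.pi * √n / (n * n ^ (-γ)) := by gcongr
    _ = 1 / 2 + 2 * Real.pi * n ^ (-(1 / 2 - γ)) := by
        rw [mul_div_assoc, Real.sqrt_eq_rpow, ← Real.rpow_one_add' hn₀.le (by linarith),
          ← Real.rpow_sub hn₀]
        ring_nf
    _ ≤ 1 / 2 + η := by gcongr; exact hN₀ _ hk

open RTree in
/-- For every `η > 0` there is `N₀` such that for all odd `N = 2k + 1 ≥ N₀`:
if `T` is any randomized decision tree on inputs from `{0,1}^N` with uncertainty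
`β_i(T) ≥ N^(-1/5)` for every coordinate `i`, and `X` is uniform on the strings with
exactly `k` or exactly `k + 1` ones, then `Pr[T(X) = Majority(X)] ≤ 1/2 + η`; in
particular such a tree cannot compute majority with error bounded below `1/2` by a
constant. -/
theorem uncertain_tree_cannot_compute_majority :
    ∀ η : ℝ, 0 < η → ∃ N₀ : ℕ, ∀ N k : ℕ, N = 2 * k + 1 → N₀ ≤ N →
      ∀ T : RTree N, T.Valid → (∀ i : Fin N, (N : ℝ) ^ (-(1 / 5) : ℝ) ≤ T.beta i) →
        (1 / ((Finset.univ.filter fun x : Fin N → Bool =>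
              wt x = k ∨ wt x = k + 1).card : ℝ)) *
          ∑ x ∈ Finset.univ.filter fun x : Fin N → Bool => wt x = k ∨ wt x = k + 1,
            (if maj x = true then T.outProb x else 1 - T.outProb x) ≤
        1 / 2 + η := by
  intro η hη
  obtain ⟨N₀, hN₀⟩ :=
    uncertain_tree_cannot_compute_majority_general (γ := 1 / 5) (by norm_num) η hη
  refine ⟨N₀, ?_⟩
  rintro _ k rfl hk T hT hβ
  exact hN₀ k hk T hT (Finset.le_expect Finset.univ_nonempty fun i _ => hβ i)
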